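/- arXiv:1706.00226 — 8 statements merged into one kernel-verified Lean document; each statement's English description precedes it below -/
import Mathlib

section
/- Let [v], [w] be torsion classes in R^n/H̄R^n and let v₀, v₀', w₀, w₀' ∈ R^n satisfy H̄v₀ = Δ·v = H̄v₀' and H̄w₀ = Δ·w = H̄w₀'. Then v₀ᵀ·H·w̄₀ = v₀'ᵀ·H·w̄₀' in R; in other words, the value (1/Δ²)·v₀ᵀ·H·w̄₀ ∈ Q(R) used to define λ_H([v],[w]) is independent of the choice of the lifts v₀ and w₀. -/
open Matrix
/-- The class of `v` in the cokernel of `M : Rⁿ → Rⁿ` is a torsion element. -/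
def torsionClass {R : Type*} [CommRing R] {m : Type*} [Fintype m]
    (M : Matrix m m R) (v : m → R) : Prop :=
  ∃ r : R, r ≠ 0 ∧ ∃ u : m → R, M *ᵥ u = r • v

section Hermitian

variable {m R : Type*}

theorem map_eq_transpose_of_transpose_map_eq {f : R → R} {H : Matrix m m R}
    (hH : (H.map f)ᵀ = H) : H.map f = Hᵀ := by
  rw [← transpose_transpose (H.map f), hH]

theorem map_map_eq_of_transpose_map_eq {f : R → R} {H : Matrix m m R}
    (hH : (H.map f)ᵀ = H) : (H.map f).map f = H := by
  rw [map_eq_transpose_of_transpose_map_eq hH, transpose_map, hH]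

theorem vecMul_eq_map_mulVec [Fintype m] [NonUnitalCommSemiring R] {f : R → R}
    {H : Matrix m m R} (hH : (H.map f)ᵀ = H) (x : m → R) : x ᵥ* H = H.map f *ᵥ x := by
  rw [map_eq_transpose_of_transpose_map_eq hH, mulVec_transpose]

theorem mulVec_comp_eq_comp_map_mulVec [Fintype m] [NonAssocSemiring R] {σ : R →+* R}
    {H : Matrix m m R} (hH : (H.map σ)ᵀ = H) (x : m → R) :
    H *ᵥ (σ ∘ x) = σ ∘ (H.map σ *ᵥ x) := by
  ext i
  rw [Function.comp_apply, RingHom.map_mulVec, map_map_eq_of_transpose_map_eq hH]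

theorem value_independent_of_lifts_general [Fintype m] [CommSemiring R] {σ : R →+* R}
    {H : Matrix m m R} (hH : (H.map σ)ᵀ = H) {v₀ v₀' w₀ w₀' : m → R}
    (hv : H.map σ *ᵥ v₀ = H.map σ *ᵥ v₀') (hw : H.map σ *ᵥ w₀ = H.map σ *ᵥ w₀') :
    v₀ ⬝ᵥ (H *ᵥ (σ ∘ w₀)) = v₀' ⬝ᵥ (H *ᵥ (σ ∘ w₀')) :=
  calc v₀ ⬝ᵥ (H *ᵥ (σ ∘ w₀))
    _ = v₀ ⬝ᵥ (H *ᵥ (σ ∘ w₀')) := by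
      rw [mulVec_comp_eq_comp_map_mulVec hH, hw, ← mulVec_comp_eq_comp_map_mulVec hH]
    _ = (v₀ ᵥ* H) ⬝ᵥ (σ ∘ w₀') := dotProduct_mulVec _ _ _
    _ = (v₀' ᵥ* H) ⬝ᵥ (σ ∘ w₀') := by
      rw [vecMul_eq_map_mulVec hH, hv, ← vecMul_eq_map_mulVec hH]
    _ = v₀' ⬝ᵥ (H *ᵥ (σ ∘ w₀')) := (dotProduct_mulVec _ _ _).symm

end Hermitian

/-- the value `v₀ᵀ · H · w̄₀` used to define `λ_H([v],[w])` is independent of the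
choice of the lifts `v₀` and `w₀`. -/
theorem value_independent_of_lifts
    {R : Type*} [CommRing R] [IsDomain R] [IsNoetherianRing R] [UniqueFactorizationMonoid R]
    (σ : R →+* R) (hσ : Function.Involutive σ)
    {n : ℕ} (H : Matrix (Fin n) (Fin n) R) (hH : (H.map σ)ᵀ = H)
    (Δ : R) (hΔ0 : Δ ≠ 0) (hΔσ : σ Δ = Δ)
    (hΔann : ∀ v : Fin n → R, torsionClass (H.map σ) v →
      ∃ v₀ : Fin n → R, (H.map σ) *ᵥ v₀ = Δ • v)
    (v w v₀ v₀' w₀ w₀' : Fin n → R)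
    (hv : torsionClass (H.map σ) v) (hw : torsionClass (H.map σ) w)
    (hv₀ : (H.map σ) *ᵥ v₀ = Δ • v) (hv₀' : (H.map σ) *ᵥ v₀' = Δ • v)
    (hw₀ : (H.map σ) *ᵥ w₀ = Δ • w) (hw₀' : (H.map σ) *ᵥ w₀' = Δ • w) :
    v₀ ⬝ᵥ (H *ᵥ (σ ∘ w₀)) = v₀' ⬝ᵥ (H *ᵥ (σ ∘ w₀')) :=
  value_independent_of_lifts_general hH (hv₀.trans hv₀'.symm) (hw₀.trans hw₀'.symm)
end

section
/- Let v, v' ∈ R^n represent the same torsion class of R^n/H̄R^n, say v' = v + H̄u with u ∈ R^n, and let w ∈ R^n represent a torsion class. If v₀, v₀', w₀ ∈ R^n satisfy H̄v₀ = Δ·v, H̄v₀' = Δ·v' and H̄w₀ = Δ·w, then (1/Δ²)·v₀'ᵀ·H·w̄₀ − (1/Δ²)·v₀ᵀ·H·w̄₀ ∈ R, and the analogous statement holds in the second variable. Consequently λ_H is a well-defined pairing Tor_R(R^n/H̄R^n) × Tor_R(R^n/H̄R^n) → Q(R)/R. -/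
open Matrix

/-! For hermitian `H`, moving `H` across the dot product turns it into `H̄`, so that
`H̄x = a v` and `H̄y = b w` give
`xᵀ H ȳ / (a b̄) = vᵀ ȳ / b̄ = xᵀ w̄ / a`.
The last expression shows that replacing `w` by `w + H̄z` adds `xᵀ H z̄ / a = vᵀ z̄`, which lies
in `R`; the middle one shows that replacing `v` by `v + H̄u` adds `uᵀ H ȳ / b̄ = uᵀ w̄`. -/

theorem map_map_of_transpose_map_eq {α m : Type*} {f : α → α} {M : Matrix m m α}
    (hM : (M.map f)ᵀ = M) : (M.map f).map f = M := by
  have hf : M.map f = Mᵀ := by rw [← transpose_transpose (M.map f), hM]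
  rw [hf, transpose_map, hM]

section Hermitian

variable {R m : Type*} [CommSemiring R] [Fintype m] {σ : R →+* R} {H : Matrix m m R}

theorem mulVec_comp_of_transpose_map_eq (hH : (H.map σ)ᵀ = H) (y : m → R) :
    H *ᵥ (σ ∘ y) = σ ∘ (H.map σ *ᵥ y) := by
  ext i
  rw [Function.comp_apply, RingHom.map_mulVec, map_map_of_transpose_map_eq hH]

theorem mulVec_comp_eq_smul_of_mulVec_eq_smul (hH : (H.map σ)ᵀ = H) {b : R} {y w : m → R}
    (hy : H.map σ *ᵥ y = b • w) : H *ᵥ (σ ∘ y) = σ b • (σ ∘ w) := by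
  rw [mulVec_comp_of_transpose_map_eq hH, hy]
  ext i
  simp

theorem dotProduct_mulVec_of_transpose_map_eq (hH : (H.map σ)ᵀ = H) (x y : m → R) :
    x ⬝ᵥ (H *ᵥ y) = (H.map σ *ᵥ x) ⬝ᵥ y := by
  rw [dotProduct_mulVec, ← vecMul_transpose, hH]

end Hermitian

/-- The fraction `xᵀ H ȳ / (a b̄)`, where `ȳ = σ ∘ y`. It represents `λ_H([v], [w])` modulo `R`
when `H̄x = a v` and `H̄y = b w`; separate denominators `a` and `b` are allowed for the two
arguments, and the choice `a = b = Δ` with `Δ̄ = Δ` gives the denominator `Δ²`. -/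
def linkingValue {R m : Type*} (K : Type*) [CommRing R] [Fintype m] [Field K] [Algebra R K]
    (σ : R →+* R) (H : Matrix m m R) (a b : R) (x y : m → R) : K :=
  algebraMap R K (x ⬝ᵥ (H *ᵥ (σ ∘ y))) / (algebraMap R K a * algebraMap R K (σ b))

namespace linkingValue

variable {R m K : Type*} [CommRing R] [Fintype m] [Field K] [Algebra R K]
  {σ : R →+* R} {H : Matrix m m R} {a a' b b' : R} {v w x x' y y' : m → R}

theorem eq_div_of_mulVec_left (hH : (H.map σ)ᵀ = H) (ha : algebraMap R K a ≠ 0)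
    (hx : H.map σ *ᵥ x = a • v) :
    linkingValue K σ H a b x y = algebraMap R K (v ⬝ᵥ (σ ∘ y)) / algebraMap R K (σ b) := by
  rw [linkingValue, dotProduct_mulVec_of_transpose_map_eq hH, hx, smul_dotProduct, smul_eq_mul,
    map_mul, mul_div_mul_left _ _ ha]

theorem eq_div_of_mulVec_right (hH : (H.map σ)ᵀ = H) (hb : algebraMap R K (σ b) ≠ 0)
    (hy : H.map σ *ᵥ y = b • w) :
    linkingValue K σ H a b x y = algebraMap R K (x ⬝ᵥ (σ ∘ w)) / algebraMap R K a := by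
  rw [linkingValue, mulVec_comp_eq_smul_of_mulVec_eq_smul hH hy, dotProduct_smul, smul_eq_mul,
    map_mul, mul_comm (algebraMap R K a), mul_div_mul_left _ _ hb]

theorem sub_eq_of_add_mulVec_left (hH : (H.map σ)ᵀ = H) (ha : algebraMap R K a ≠ 0)
    (ha' : algebraMap R K a' ≠ 0) (hb : algebraMap R K (σ b) ≠ 0) (u : m → R)
    (hx : H.map σ *ᵥ x = a • v) (hx' : H.map σ *ᵥ x' = a' • (v + H.map σ *ᵥ u))
    (hy : H.map σ *ᵥ y = b • w) :
    linkingValue K σ H a' b x' y - linkingValue K σ H a b x y =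
      algebraMap R K (u ⬝ᵥ (σ ∘ w)) := by
  have hu : (H.map σ *ᵥ u) ⬝ᵥ (σ ∘ y) = σ b * (u ⬝ᵥ (σ ∘ w)) := by
    rw [← dotProduct_mulVec_of_transpose_map_eq hH,
      mulVec_comp_eq_smul_of_mulVec_eq_smul hH hy, dotProduct_smul, smul_eq_mul]
  rw [eq_div_of_mulVec_left hH ha' hx', eq_div_of_mulVec_left hH ha hx, ← sub_div, ← map_sub,
    add_dotProduct, add_sub_cancel_left, hu, map_mul, mul_div_cancel_left₀ _ hb]

theorem sub_eq_of_add_mulVec_right (hH : (H.map σ)ᵀ = H) (ha : algebraMap R K a ≠ 0)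
    (hb : algebraMap R K (σ b) ≠ 0) (hb' : algebraMap R K (σ b') ≠ 0) (z : m → R)
    (hx : H.map σ *ᵥ x = a • v) (hy : H.map σ *ᵥ y = b • w)
    (hy' : H.map σ *ᵥ y' = b' • (w + H.map σ *ᵥ z)) :
    linkingValue K σ H a b' x y' - linkingValue K σ H a b x y =
      algebraMap R K (v ⬝ᵥ (σ ∘ z)) := by
  have hσ : σ ∘ (w + H.map σ *ᵥ z) = σ ∘ w + H *ᵥ (σ ∘ z) := by
    rw [mulVec_comp_of_transpose_map_eq hH]
    ext i
    simp
  have hz : x ⬝ᵥ (H *ᵥ (σ ∘ z)) = a * (v ⬝ᵥ (σ ∘ z)) := by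
    rw [dotProduct_mulVec_of_transpose_map_eq hH, hx, smul_dotProduct, smul_eq_mul]
  rw [eq_div_of_mulVec_right hH hb' hy', eq_div_of_mulVec_right hH hb hy, ← sub_div, ← map_sub,
    hσ, dotProduct_add, add_sub_cancel_left, hz, map_mul, mul_div_cancel_left₀ _ ha]

end linkingValue

theorem lambda_well_defined_general {R m K : Type*} [CommRing R] [Fintype m] [Field K]
    [Algebra R K] {σ : R →+* R} {H : Matrix m m R} (hH : (H.map σ)ᵀ = H) {a a' b b' : R}
    (ha : algebraMap R K a ≠ 0) (ha' : algebraMap R K a' ≠ 0)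
    (hb : algebraMap R K (σ b) ≠ 0) (hb' : algebraMap R K (σ b') ≠ 0)
    {v w v₀ v₀' w₀ w₀' : m → R} (u z : m → R)
    (hv₀ : H.map σ *ᵥ v₀ = a • v) (hv₀' : H.map σ *ᵥ v₀' = a' • (v + H.map σ *ᵥ u))
    (hw₀ : H.map σ *ᵥ w₀ = b • w) (hw₀' : H.map σ *ᵥ w₀' = b' • (w + H.map σ *ᵥ z)) :
    ∃ r : R, algebraMap R K r =
      linkingValue K σ H a' b' v₀' w₀' - linkingValue K σ H a b v₀ w₀ := by
  refine ⟨(v + H.map σ *ᵥ u) ⬝ᵥ (σ ∘ z) + u ⬝ᵥ (σ ∘ w), ?_⟩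
  rw [map_add, ← linkingValue.sub_eq_of_add_mulVec_right hH ha' hb hb' z hv₀' hw₀ hw₀',
    ← linkingValue.sub_eq_of_add_mulVec_left hH ha ha' hb u hv₀ hv₀' hw₀, sub_add_sub_cancel]

/-- the value `(1/Δ²)·v₀ᵀ·H·w̄₀` is, modulo `R`, independent of the choice of the
representatives of the torsion classes, in each variable; consequently `λ_H` is well defined
as a pairing with values in `Q(R)/R`. -/
theorem lambda_well_defined
    {R : Type*} [CommRing R] [IsDomain R] [IsNoetherianRing R] [UniqueFactorizationMonoid R]
    (σ : R →+* R) (hσ : Function.Involutive σ)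
    {n : ℕ} (H : Matrix (Fin n) (Fin n) R) (hH : (H.map σ)ᵀ = H)
    (Δ : R) (hΔ0 : Δ ≠ 0) (hΔσ : σ Δ = Δ)
    (hΔann : ∀ v : Fin n → R, torsionClass (H.map σ) v →
      ∃ v₀ : Fin n → R, (H.map σ) *ᵥ v₀ = Δ • v) :
    (∀ v v' u w v₀ v₀' w₀ : Fin n → R,
      torsionClass (H.map σ) v → torsionClass (H.map σ) w →
      v' = v + (H.map σ) *ᵥ u →
      (H.map σ) *ᵥ v₀ = Δ • v → (H.map σ) *ᵥ v₀' = Δ • v' → (H.map σ) *ᵥ w₀ = Δ • w →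
      ∃ r : R, algebraMap R (FractionRing R) r =
        algebraMap R (FractionRing R) (v₀' ⬝ᵥ (H *ᵥ (σ ∘ w₀))) /
          (algebraMap R (FractionRing R) Δ) ^ 2 -
        algebraMap R (FractionRing R) (v₀ ⬝ᵥ (H *ᵥ (σ ∘ w₀))) /
          (algebraMap R (FractionRing R) Δ) ^ 2) ∧
    (∀ w w' u v w₀ w₀' v₀ : Fin n → R,
      torsionClass (H.map σ) v → torsionClass (H.map σ) w →
      w' = w + (H.map σ) *ᵥ u →
      (H.map σ) *ᵥ w₀ = Δ • w → (H.map σ) *ᵥ w₀' = Δ • w' → (H.map σ) *ᵥ v₀ = Δ • v →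
      ∃ r : R, algebraMap R (FractionRing R) r =
        algebraMap R (FractionRing R) (v₀ ⬝ᵥ (H *ᵥ (σ ∘ w₀'))) /
          (algebraMap R (FractionRing R) Δ) ^ 2 -
        algebraMap R (FractionRing R) (v₀ ⬝ᵥ (H *ᵥ (σ ∘ w₀))) /
          (algebraMap R (FractionRing R) Δ) ^ 2) := by
  have hΔ : algebraMap R (FractionRing R) Δ ≠ 0 := by simpa using hΔ0
  have hσΔ : algebraMap R (FractionRing R) (σ Δ) ≠ 0 := by rwa [hΔσ]
  constructor
  · rintro v _ u w v₀ v₀' w₀ - - rfl hv₀ hv₀' hw₀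
    simpa only [linkingValue, hΔσ, ← sq] using
      lambda_well_defined_general hH hΔ hΔ hσΔ hσΔ u 0 hv₀ hv₀' hw₀ (by simpa using hw₀)
  · rintro w _ z v w₀ w₀' v₀ - - rfl hw₀ hw₀' hv₀
    simpa only [linkingValue, hΔσ, ← sq] using
      lambda_well_defined_general hH hΔ hΔ hσΔ hσΔ 0 z hv₀ (by simpa using hv₀) hw₀ hw₀'
end

section
/- The pairing λ_H is hermitian: for all torsion classes [v], [w] in R^n/H̄R^n, λ_H([w],[v]) equals the image of λ_H([v],[w]) under the involution of Q(R)/R induced by the involution of Q(R). -/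
open Matrix

theorem map_dotProduct_mulVec_comp_of_involutive {R : Type*} [CommSemiring R] {m n : Type*}
    [Fintype m] [Fintype n] (σ : R →+* R) (hσ : Function.Involutive σ) (M : Matrix m n R)
    (v : m → R) (w : n → R) :
    σ (v ⬝ᵥ M *ᵥ (σ ∘ w)) = w ⬝ᵥ (M.map σ)ᵀ *ᵥ (σ ∘ v) := by
  have hw : σ ∘ σ ∘ w = w := by rw [← Function.comp_assoc, hσ.comp_self, Function.id_comp]
  calc σ (v ⬝ᵥ M *ᵥ (σ ∘ w))
      = (σ ∘ v) ⬝ᵥ M.map σ *ᵥ (σ ∘ σ ∘ w) := by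
        rw [RingHom.map_dotProduct]
        exact congrArg _ (funext (RingHom.map_mulVec σ M _))
    _ = (σ ∘ v) ⬝ᵥ M.map σ *ᵥ w := by rw [hw]
    _ = w ⬝ᵥ (M.map σ)ᵀ *ᵥ (σ ∘ v) := by
        rw [dotProduct_mulVec, dotProduct_comm, mulVec_transpose]

theorem lambda_hermitian_general {R K : Type*} [CommSemiring R] [Semifield K] [Algebra R K]
    (σ : R →+* R) (hσ : Function.Involutive σ) (σK : K →+* K)
    (hcompat : ∀ r : R, σK (algebraMap R K r) = algebraMap R K (σ r))
    {n : Type*} [Fintype n] (H : Matrix n n R) (hH : (H.map σ)ᵀ = H)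
    (Δ : R) (hΔ0 : algebraMap R K Δ ≠ 0) (hΔσ : σ Δ = Δ) (v₀ w₀ : n → R) :
    algebraMap R K (w₀ ⬝ᵥ (H *ᵥ (σ ∘ v₀))) / (algebraMap R K Δ) ^ 2 =
      σK (algebraMap R K (v₀ ⬝ᵥ (H *ᵥ (σ ∘ w₀))) / (algebraMap R K Δ) ^ 2) := by
  rw [map_div₀, map_pow, hcompat, hcompat, hΔσ, map_dotProduct_mulVec_comp_of_involutive σ hσ, hH]

/-- the pairing `λ_H` is hermitian: `λ_H([w],[v])` equals the image of
`λ_H([v],[w])` under the involution of `Q(R)/R` induced by the involution of `Q(R)`. -/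
theorem lambda_hermitian
    {R : Type*} [CommRing R] [IsDomain R] [IsNoetherianRing R] [UniqueFactorizationMonoid R]
    (σ : R →+* R) (hσ : Function.Involutive σ)
    (σK : FractionRing R →+* FractionRing R) (hσK : Function.Involutive σK)
    (hcompat : ∀ r : R, σK (algebraMap R (FractionRing R) r) = algebraMap R (FractionRing R) (σ r))
    {n : ℕ} (H : Matrix (Fin n) (Fin n) R) (hH : (H.map σ)ᵀ = H)
    (Δ : R) (hΔ0 : Δ ≠ 0) (hΔσ : σ Δ = Δ)
    (hΔann : ∀ v : Fin n → R, torsionClass (H.map σ) v →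
      ∃ v₀ : Fin n → R, (H.map σ) *ᵥ v₀ = Δ • v)
    (v w v₀ w₀ : Fin n → R)
    (hv : torsionClass (H.map σ) v) (hw : torsionClass (H.map σ) w)
    (hv₀ : (H.map σ) *ᵥ v₀ = Δ • v) (hw₀ : (H.map σ) *ᵥ w₀ = Δ • w) :
    ∃ r : R, algebraMap R (FractionRing R) r =
      algebraMap R (FractionRing R) (w₀ ⬝ᵥ (H *ᵥ (σ ∘ v₀))) /
        (algebraMap R (FractionRing R) Δ) ^ 2 -
      σK (algebraMap R (FractionRing R) (v₀ ⬝ᵥ (H *ᵥ (σ ∘ w₀))) /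
        (algebraMap R (FractionRing R) Δ) ^ 2) := by
  have hΔK : algebraMap R (FractionRing R) Δ ≠ 0 := by simpa using hΔ0
  exact ⟨0, by rw [lambda_hermitian_general σ hσ σK hcompat H hH Δ hΔK hΔσ, sub_self, map_zero]⟩
end

section
/- Let H be a hermitian n×n matrix over R with det(H) ≠ 0. Then the R-module R^n/H̄R^n is torsion, and the assignment (a,b) ↦ aᵀ·H⁻¹·b̄ mod R (with H⁻¹ the inverse of H over Q(R)) induces a well-defined pairing R^n/H̄R^n × R^n/H̄R^n → Q(R)/R which is sesquilinear and hermitian. -/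
open Matrix

/-- The pairing `(a, b) ↦ aᵀ·H⁻¹·b̄` with values in the fraction field `Q(R)`, where the
inverse of `H` is taken over `Q(R)`. -/
noncomputable def invPairing {R : Type*} [CommRing R] [IsDomain R] {n : ℕ}
    (H : Matrix (Fin n) (Fin n) R) (σ : R →+* R) (a b : Fin n → R) : FractionRing R :=
  (fun i => algebraMap R (FractionRing R) (a i)) ⬝ᵥ
    ((H.map (algebraMap R (FractionRing R)))⁻¹ *ᵥ
      fun i => algebraMap R (FractionRing R) (σ (b i)))

/-! Over `Q(R)` the matrices cancel: `(Hᵀu)ᵀ·H⁻¹·b̄ = uᵀ·b̄` and `aᵀ·H⁻¹·(H̄s)‾ = aᵀ·s̄` both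
lie in `R`. So `aᵀ·H⁻¹·b̄ mod R` ignores `HᵀRⁿ` in the first variable and `H̄Rⁿ` in the second,
and these submodules agree because `H` is hermitian. Conjugating the value of the form of `H` at
`(a, b)` gives the value of the form of `H̄ᵀ` at `(b, a)`, and `det H` kills the cokernel of
`H̄ = Hᵀ` because `Hᵀ·adj(Hᵀ) = det H`. -/

theorem exists_mulVec_eq_det_smul {R ι : Type*} [CommRing R] [Fintype ι] [DecidableEq ι]
    (A : Matrix ι ι R) (v : ι → R) : ∃ u, A *ᵥ u = A.det • v :=
  ⟨A.adjugate *ᵥ v, by rw [mulVec_mulVec, mul_adjugate, smul_mulVec, one_mulVec]⟩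

theorem isUnit_det_map {R S ι : Type*} [CommRing R] [CommRing S] [Fintype ι] [DecidableEq ι]
    {f : R →+* S} {A : Matrix ι ι R} (hA : IsUnit (f A.det)) : IsUnit (A.map f).det := by
  rwa [RingHom.map_det] at hA

theorem map_nonsing_inv_of_isUnit_det {R S ι : Type*} [CommRing R] [CommRing S] [Fintype ι]
    [DecidableEq ι] (f : R →+* S) {A : Matrix ι ι R} (hA : IsUnit A.det) :
    A⁻¹.map f = (A.map f)⁻¹ := by
  refine (inv_eq_left_inv ?_).symm
  rw [← Matrix.map_mul, nonsing_inv_mul A hA, Matrix.map_one f f.map_zero f.map_one]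

section InverseForm

variable {R ι : Type*} [CommRing R] [Fintype ι] [DecidableEq ι]
variable (K : Type*) [CommRing K] [Algebra R K]

/-- The sesquilinear form `(a, b) ↦ aᵀ·H⁻¹·b̄` on `R^ι` with values in an `R`-algebra `K`, where the
inverse of `H` is taken over `K`; it is meaningful when `det H` is a unit of `K`. This is
`invPairing` for arbitrary coefficients and index types, with its sesquilinearity bundled. -/
noncomputable def inverseForm (H : Matrix ι ι R) (σ : R →+* R) :
    (ι → R) →ₗ[R] (ι → R) →ₛₗ[σ] K :=
  LinearMap.mk₂'ₛₗ (RingHom.id R) σ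
    (fun a b => (algebraMap R K ∘ a) ⬝ᵥ
      ((H.map (algebraMap R K))⁻¹ *ᵥ (algebraMap R K ∘ σ ∘ b)))
    (fun a a' b => by
      have map_add_vec : algebraMap R K ∘ (a + a') = algebraMap R K ∘ a + algebraMap R K ∘ a' := by
        ext; simp
      rw [map_add_vec, add_dotProduct])
    (fun c a b => by
      have map_smul_vec : algebraMap R K ∘ (c • a) = c • (algebraMap R K ∘ a) := by
        ext; simp [Algebra.smul_def]
      rw [map_smul_vec, smul_dotProduct, RingHom.id_apply])
    (fun a b b' => by
      have map_add_vec : algebraMap R K ∘ σ ∘ (b + b') =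
          algebraMap R K ∘ σ ∘ b + algebraMap R K ∘ σ ∘ b' := by
        ext; simp
      rw [map_add_vec, mulVec_add, dotProduct_add])
    (fun c a b => by
      have map_smul_vec : algebraMap R K ∘ σ ∘ (c • b) = σ c • (algebraMap R K ∘ σ ∘ b) := by
        ext; simp [Algebra.smul_def]
      rw [map_smul_vec, mulVec_smul, dotProduct_smul])

theorem inverseForm_apply (H : Matrix ι ι R) (σ : R →+* R) (a b : ι → R) :
    inverseForm K H σ a b = (algebraMap R K ∘ a) ⬝ᵥ
      ((H.map (algebraMap R K))⁻¹ *ᵥ (algebraMap R K ∘ σ ∘ b)) :=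
  rfl

variable {K} {H : Matrix ι ι R} {σ : R →+* R}

theorem inverseForm_smul_smul (p q : R) (a b : ι → R) :
    inverseForm K H σ (p • a) (q • b) =
      algebraMap R K p * inverseForm K H σ a b * algebraMap R K (σ q) := by
  rw [LinearMap.map_smul₂, LinearMap.map_smulₛₗ, Algebra.smul_def, Algebra.smul_def]
  ring

theorem inverseForm_transpose_mulVec_left (hdet : IsUnit (algebraMap R K H.det)) (u b : ι → R) :
    inverseForm K H σ (Hᵀ *ᵥ u) b = algebraMap R K (u ⬝ᵥ (σ ∘ b)) := by
  have map_image : algebraMap R K ∘ (Hᵀ *ᵥ u) =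
      (algebraMap R K ∘ u) ᵥ* H.map (algebraMap R K) := by
    ext i
    rw [mulVec_transpose, Function.comp_apply, RingHom.map_vecMul]
  rw [inverseForm_apply, map_image, ← dotProduct_mulVec, mulVec_mulVec,
    mul_nonsing_inv _ (isUnit_det_map hdet), one_mulVec, RingHom.map_dotProduct]

theorem inverseForm_conj_mulVec_right (hσ : Function.Involutive σ)
    (hdet : IsUnit (algebraMap R K H.det)) (a s : ι → R) :
    inverseForm K H σ a (H.map σ *ᵥ s) = algebraMap R K (a ⬝ᵥ (σ ∘ s)) := by
  have conj_image : algebraMap R K ∘ σ ∘ (H.map σ *ᵥ s) =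
      H.map (algebraMap R K) *ᵥ (algebraMap R K ∘ σ ∘ s) := by
    ext i
    simp only [Function.comp_apply, RingHom.map_mulVec, Matrix.map_map, hσ.comp_self,
      Matrix.map_id]
  rw [inverseForm_apply, conj_image, mulVec_mulVec, nonsing_inv_mul _ (isUnit_det_map hdet),
    one_mulVec, RingHom.map_dotProduct]

theorem conj_inverseForm (hσ : Function.Involutive σ) {σK : K →+* K}
    (hcompat : ∀ r, σK (algebraMap R K r) = algebraMap R K (σ r))
    (hdet : IsUnit (algebraMap R K H.det)) (a b : ι → R) :
    σK (inverseForm K H σ a b) = inverseForm K (H.map σ)ᵀ σ b a := by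
  have conj_inv : (H.map (algebraMap R K))⁻¹.map σK = ((H.map σ).map (algebraMap R K))⁻¹ := by
    rw [map_nonsing_inv_of_isUnit_det σK (isUnit_det_map hdet)]
    congr 1
    ext i j
    exact hcompat (H i j)
  have conj_left : σK ∘ algebraMap R K ∘ a = algebraMap R K ∘ σ ∘ a :=
    funext fun i => hcompat (a i)
  have conj_right : σK ∘ algebraMap R K ∘ σ ∘ b = algebraMap R K ∘ b :=
    funext fun i => (hcompat (σ (b i))).trans (congrArg _ (hσ (b i)))
  calc σK (inverseForm K H σ a b)
      = (algebraMap R K ∘ σ ∘ a) ⬝ᵥ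
          (((H.map σ).map (algebraMap R K))⁻¹ *ᵥ (algebraMap R K ∘ b)) := by
        rw [inverseForm_apply, RingHom.map_dotProduct, conj_left, ← conj_inv, ← conj_right]
        congr 1
        ext i
        exact RingHom.map_mulVec σK _ _ i
    _ = inverseForm K (H.map σ)ᵀ σ b a := by
        rw [inverseForm_apply, transpose_map, ← transpose_nonsing_inv,
          dotProduct_transpose_mulVec, dotProduct_comm]

theorem exists_inverseForm_add_sub_eq_algebraMap (hσ : Function.Involutive σ)
    (hH : (H.map σ)ᵀ = H) (hdet : IsUnit (algebraMap R K H.det)) (a b u s : ι → R) :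
    ∃ r : R, algebraMap R K r =
      inverseForm K H σ (a + H.map σ *ᵥ u) (b + H.map σ *ᵥ s) - inverseForm K H σ a b := by
  have left (c : ι → R) : inverseForm K H σ (H.map σ *ᵥ u) c = algebraMap R K (u ⬝ᵥ (σ ∘ c)) := by
    rw [(transpose_involutive _ _).eq_iff.mp hH, inverseForm_transpose_mulVec_left hdet]
  refine ⟨u ⬝ᵥ (σ ∘ (b + H.map σ *ᵥ s)) + a ⬝ᵥ (σ ∘ s), ?_⟩
  rw [map_add (inverseForm K H σ), LinearMap.add_apply, left, map_add (inverseForm K H σ a),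
    inverseForm_conj_mulVec_right hσ hdet, map_add (algebraMap R K)]
  ring

-- Additivity in each variable is part of the type of `inverseForm`.
theorem inv_pairing_well_defined_sesquilinear_hermitian_general [IsFractionRing R K]
    (hσ : Function.Involutive σ) {σK : K →+* K}
    (hcompat : ∀ r, σK (algebraMap R K r) = algebraMap R K (σ r))
    (hH : (H.map σ)ᵀ = H) (hdet : H.det ∈ nonZeroDivisors R) :
    (∀ v : ι → R, ∃ r ∈ nonZeroDivisors R, ∃ u, H.map σ *ᵥ u = r • v) ∧
    (∀ a b u s : ι → R, ∃ r : R, algebraMap R K r =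
      inverseForm K H σ (a + H.map σ *ᵥ u) (b + H.map σ *ᵥ s) - inverseForm K H σ a b) ∧
    (∀ (p q : R) (a b : ι → R), inverseForm K H σ (p • a) (q • b) =
      algebraMap R K p * inverseForm K H σ a b * algebraMap R K (σ q)) ∧
    (∀ a b : ι → R, inverseForm K H σ b a = σK (inverseForm K H σ a b)) := by
  have hdetK : IsUnit (algebraMap R K H.det) := IsLocalization.map_units K ⟨H.det, hdet⟩
  refine ⟨fun v => ⟨H.det, hdet, ?_⟩, exists_inverseForm_add_sub_eq_algebraMap hσ hH hdetK,
    inverseForm_smul_smul, fun a b => ?_⟩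
  · rw [(transpose_involutive _ _).eq_iff.mp hH, ← det_transpose]
    exact exists_mulVec_eq_det_smul Hᵀ v
  · rw [conj_inverseForm hσ hcompat hdetK, hH]

end InverseForm

/-- if `H` is hermitian with `det H ≠ 0`, then `Rⁿ/H̄Rⁿ` is torsion, and
`(a,b) ↦ aᵀ·H⁻¹·b̄ mod R` induces a well-defined pairing on `Rⁿ/H̄Rⁿ` with values in
`Q(R)/R` which is sesquilinear and hermitian. -/
theorem inv_pairing_well_defined_sesquilinear_hermitian
    {R : Type*} [CommRing R] [IsDomain R] [IsNoetherianRing R] [UniqueFactorizationMonoid R]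
    (σ : R →+* R) (hσ : Function.Involutive σ)
    (σK : FractionRing R →+* FractionRing R) (hσK : Function.Involutive σK)
    (hcompat : ∀ r : R, σK (algebraMap R (FractionRing R) r) = algebraMap R (FractionRing R) (σ r))
    {n : ℕ} (H : Matrix (Fin n) (Fin n) R) (hH : (H.map σ)ᵀ = H)
    (hdet : H.det ≠ 0) :
    -- the cokernel of `H̄` is a torsion `R`-module
    (∀ v : Fin n → R, ∃ r : R, r ≠ 0 ∧ ∃ u : Fin n → R, (H.map σ) *ᵥ u = r • v) ∧
    -- well-definedness modulo `R` in both variables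
    (∀ a b u s : Fin n → R, ∃ r : R, algebraMap R (FractionRing R) r =
      invPairing H σ (a + (H.map σ) *ᵥ u) (b + (H.map σ) *ᵥ s) - invPairing H σ a b) ∧
    -- sesquilinearity (as a pairing with values in `Q(R)/R`)
    (∀ (p q : R) (a b : Fin n → R), ∃ r : R, algebraMap R (FractionRing R) r =
      invPairing H σ (p • a) (q • b) -
        algebraMap R (FractionRing R) p * invPairing H σ a b *
          algebraMap R (FractionRing R) (σ q)) ∧
    -- hermitian property (as a pairing with values in `Q(R)/R`)
    (∀ a b : Fin n → R, ∃ r : R, algebraMap R (FractionRing R) r =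
      invPairing H σ b a - σK (invPairing H σ a b)) := by
  have eq_mod {x y : FractionRing R} (h : x = y) :
      ∃ r : R, algebraMap R (FractionRing R) r = x - y := ⟨0, by rw [h, sub_self, map_zero]⟩
  obtain ⟨htorsion, hwell, hsesq, hherm⟩ :=
    inv_pairing_well_defined_sesquilinear_hermitian_general
      hσ hcompat hH (mem_nonZeroDivisors_of_ne_zero hdet)
  exact ⟨fun v => (htorsion v).imp fun _ => And.imp_left nonZeroDivisors.ne_zero, hwell,
    fun p q a b => eq_mod (hsesq p q a b), fun a b => eq_mod (hherm a b)⟩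
end

section
/- Let ξ ∈ R^n be a column vector, let μ ∈ R satisfy μ̄ = μ, and let α be a unit of R. Let H' be the (n+2)×(n+2) matrix given in block form by rows [H, ξ, 0], [ξ̄ᵀ, μ, α], [0, ᾱ, 0]. Then H' is hermitian, the torsion submodules Tor_R(R^n/H̄R^n) and Tor_R(R^{n+2}/H̄'R^{n+2}) are isomorphic as R-modules, Δ annihilates Tor_R(R^{n+2}/H̄'R^{n+2}) and so defines λ_{H'}, and the pairings λ_{H'} and λ_H are isometric: there is an R-module isomorphism φ between the torsion submodules with λ_{H'}(φ(x),φ(y)) = λ_H(x,y) for all torsion classes x, y. -/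
open Matrix
open scoped Classical

/-- The value `(1/Δ²)·v₀ᵀ·H·w̄₀ ∈ Q(R)` computed from chosen lifts `v₀, w₀` of `v, w`
(and `0` if no lifts exist). -/
noncomputable def lamVal {R : Type*} [CommRing R] [IsDomain R] {m : Type*} [Fintype m]
    (H : Matrix m m R) (σ : R →+* R) (Δ : R) (v w : m → R) : FractionRing R :=
  if h : (∃ v₀ : m → R, (H.map σ) *ᵥ v₀ = Δ • v) ∧ (∃ w₀ : m → R, (H.map σ) *ᵥ w₀ = Δ • w) then
    algebraMap R (FractionRing R) (h.1.choose ⬝ᵥ (H *ᵥ (σ ∘ h.2.choose))) /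
      (algebraMap R (FractionRing R) Δ) ^ 2
  else 0

/-- The pairing `λ_H` on the torsion submodule of `Rⁿ/H̄Rⁿ`, with values in `Q(R)/R`. -/
noncomputable def lam {R : Type*} [CommRing R] [IsDomain R] {m : Type*} [Fintype m]
    (H : Matrix m m R) (σ : R →+* R) (Δ : R)
    (x y : Submodule.torsion R ((m → R) ⧸ LinearMap.range (H.map σ).mulVecLin)) :
    FractionRing R ⧸ ((algebraMap R (FractionRing R)).range).toAddSubgroup :=
  QuotientAddGroup.mk (lamVal H σ Δ (Quotient.out x.val) (Quotient.out y.val))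

/-- The matrix `H'` with block rows `[H, ξ, 0]`, `[ξ̄ᵀ, μ, α]`, `[0, ᾱ, 0]`. -/
def extMat {R : Type*} [CommRing R] {n : ℕ} (σ : R →+* R) (H : Matrix (Fin n) (Fin n) R)
    (ξ : Fin n → R) (μ a : R) : Matrix (Fin n ⊕ Fin 2) (Fin n ⊕ Fin 2) R :=
  Matrix.fromBlocks H
    (Matrix.of fun i j => if j = 0 then ξ i else 0)
    (Matrix.of fun j i => if j = 0 then σ (ξ i) else 0)
    !![μ, a; σ a, 0]


/-!
Write `A = H̄`. The form `⟨x, y⟩ = xᵀ ȳ` satisfies `⟨A x, y⟩ = ⟨x, A y⟩`, so the pairing of the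
classes of `v` and `w` is `⟨v₀, w⟩ / Δ` for any `v₀` with `A v₀ = Δ v`; modulo `R` it depends on
neither the lift `v₀` nor the representatives. Because `α` is a unit, the last two coordinates of
`H̄' u' = v'` can be solved for the last two entries of `u'`, and what remains is
`A u = v - α⁻¹ t ξ̄`, where `v' = (v, s, t)`. So the image of `H̄'` is the preimage of the image of
`A` under `(v, s, t) ↦ v - α⁻¹ t ξ̄`, and the inverse of the induced isomorphism of cokernels is
`[v] ↦ [(v, 0, 0)]`. The first `n` entries of a lift of `(v, 0, 0)` form a lift of `v`,
and pairing either lift with `(w, 0, 0)`, respectively `w`, gives the same element of `R`.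
-/

section Torsion

variable {R : Type*} [CommRing R]

theorem map_torsion_linearEquiv {M N : Type*} [AddCommGroup M] [Module R M] [AddCommGroup N]
    [Module R N] (e : M ≃ₗ[R] N) :
    (Submodule.torsion R M).map (e : M →ₗ[R] N) = Submodule.torsion R N := by
  ext y
  rw [Submodule.mem_map_equiv]
  simp only [Submodule.mem_torsion_iff, Submonoid.smul_def, ← map_smul,
    LinearEquiv.map_eq_zero_iff]

theorem mk_mem_torsion_iff_torsionClass [IsDomain R] {m : Type*} [Fintype m] {M : Matrix m m R}
    {v : m → R} :
    (Submodule.Quotient.mk v : (m → R) ⧸ LinearMap.range M.mulVecLin) ∈ Submodule.torsion R _ ↔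
      torsionClass M v := by
  simp only [Submodule.mem_torsion_iff, Submonoid.smul_def, ← Submodule.Quotient.mk_smul,
    Submodule.Quotient.mk_eq_zero, LinearMap.mem_range, mulVecLin_apply, torsionClass,
    Subtype.exists, mem_nonZeroDivisors_iff_ne_zero, exists_prop]

end Torsion

theorem mk_div_eq_mk_div_of_dvd_sub {R K : Type*} [CommRing R] [Field K] [Algebra R K] {x y d : R}
    (hd : algebraMap R K d ≠ 0) (h : d ∣ x - y) :
    (QuotientAddGroup.mk (algebraMap R K x / algebraMap R K d) :
      K ⧸ (algebraMap R K).range.toAddSubgroup) =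
    QuotientAddGroup.mk (algebraMap R K y / algebraMap R K d) := by
  obtain ⟨c, hc⟩ := h
  rw [← sub_eq_zero, ← QuotientAddGroup.mk_sub, QuotientAddGroup.eq_zero_iff, ← sub_div,
    ← map_sub, hc, map_mul, mul_div_cancel_left₀ _ hd]
  exact ⟨c, rfl⟩

section Pairing

variable {R : Type*} [CommRing R] {m : Type*} [Fintype m] {σ : R →+* R} {H : Matrix m m R}

theorem comp_map_mulVec (hσ : Function.Involutive σ) (x : m → R) :
    σ ∘ (H.map σ *ᵥ x) = H *ᵥ (σ ∘ x) := by
  ext i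
  simp [RingHom.map_mulVec, Function.comp_def, hσ _]

theorem map_mulVec_dotProduct (hH : (H.map σ)ᵀ = H) (x y : m → R) :
    (H.map σ *ᵥ x) ⬝ᵥ y = x ⬝ᵥ (H *ᵥ y) := by
  have hH' : Hᵀ = H.map σ := (congrArg transpose hH).symm
  rw [dotProduct_mulVec, ← mulVec_transpose, hH']

theorem map_mulVec_dotProduct_comp (hσ : Function.Involutive σ) (hH : (H.map σ)ᵀ = H)
    (x y : m → R) :
    (H.map σ *ᵥ x) ⬝ᵥ (σ ∘ y) = x ⬝ᵥ (σ ∘ (H.map σ *ᵥ y)) := by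
  rw [comp_map_mulVec hσ, map_mulVec_dotProduct hH]

theorem dotProduct_comp_smul (c : R) (x y : m → R) :
    x ⬝ᵥ (σ ∘ (c • y)) = σ c * x ⬝ᵥ (σ ∘ y) := by
  rw [← smul_eq_mul, ← dotProduct_smul]
  congr 1
  ext i
  simp

variable [IsDomain R]

theorem dotProduct_comp_eq_zero_of_map_mulVec_eq_zero (hσ : Function.Involutive σ)
    (hH : (H.map σ)ᵀ = H) {Δ : R} (hΔ0 : Δ ≠ 0) (hΔσ : σ Δ = Δ) {x w w₀ : m → R}
    (hx : H.map σ *ᵥ x = 0) (hw : H.map σ *ᵥ w₀ = Δ • w) :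
    x ⬝ᵥ (σ ∘ w) = 0 := by
  refine (mul_eq_zero.mp ?_).resolve_left hΔ0
  calc Δ * x ⬝ᵥ (σ ∘ w) = x ⬝ᵥ (σ ∘ (Δ • w)) := by rw [dotProduct_comp_smul, hΔσ]
    _ = (H.map σ *ᵥ x) ⬝ᵥ (σ ∘ w₀) := by rw [← hw, map_mulVec_dotProduct_comp hσ hH]
    _ = 0 := by rw [hx, zero_dotProduct]

theorem dvd_dotProduct_comp_sub (hσ : Function.Involutive σ) (hH : (H.map σ)ᵀ = H) {Δ : R}
    (hΔ0 : Δ ≠ 0) (hΔσ : σ Δ = Δ) {v v' v₀ v₀' w w' w₀ : m → R}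
    (hv : H.map σ *ᵥ v₀ = Δ • v) (hv' : H.map σ *ᵥ v₀' = Δ • v') (hw : H.map σ *ᵥ w₀ = Δ • w)
    (hvv' : v - v' ∈ LinearMap.range (H.map σ).mulVecLin)
    (hww' : w - w' ∈ LinearMap.range (H.map σ).mulVecLin) :
    Δ ∣ v₀ ⬝ᵥ (σ ∘ w) - v₀' ⬝ᵥ (σ ∘ w') := by
  obtain ⟨s, hs⟩ := hvv'
  obtain ⟨t, ht⟩ := hww'
  rw [mulVecLin_apply] at hs ht
  have change_left : (v₀ - v₀') ⬝ᵥ (σ ∘ w) = Δ * s ⬝ᵥ (σ ∘ w) := by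
    have hker : H.map σ *ᵥ (v₀ - v₀' - Δ • s) = 0 := by
      rw [mulVec_sub, mulVec_sub, mulVec_smul, hv, hv', hs, smul_sub, sub_self]
    have := dotProduct_comp_eq_zero_of_map_mulVec_eq_zero hσ hH hΔ0 hΔσ hker hw
    rwa [sub_dotProduct, smul_dotProduct, smul_eq_mul, sub_eq_zero] at this
  have change_right : v₀' ⬝ᵥ (σ ∘ (w - w')) = Δ * v' ⬝ᵥ (σ ∘ t) := by
    rw [← ht, ← map_mulVec_dotProduct_comp hσ hH, hv', smul_dotProduct, smul_eq_mul]
  have hcomp : σ ∘ (w - w') = σ ∘ w - σ ∘ w' := by ext; simp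
  rw [hcomp, dotProduct_sub] at change_right
  rw [sub_dotProduct] at change_left
  exact ⟨s ⬝ᵥ (σ ∘ w) + v' ⬝ᵥ (σ ∘ t), by linear_combination change_left + change_right⟩

theorem exists_lamVal_eq_div (hσ : Function.Involutive σ) {Δ : R} (hΔ0 : Δ ≠ 0) (hΔσ : σ Δ = Δ)
    {v w : m → R} (hv : ∃ v₀, H.map σ *ᵥ v₀ = Δ • v) (hw : ∃ w₀, H.map σ *ᵥ w₀ = Δ • w) :
    ∃ v₀, H.map σ *ᵥ v₀ = Δ • v ∧ lamVal H σ Δ v w =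
      algebraMap R (FractionRing R) (v₀ ⬝ᵥ (σ ∘ w)) / algebraMap R (FractionRing R) Δ := by
  have hΔ : algebraMap R (FractionRing R) Δ ≠ 0 := by simpa using hΔ0
  refine ⟨hv.choose, hv.choose_spec, ?_⟩
  rw [lamVal, dif_pos ⟨hv, hw⟩, ← comp_map_mulVec hσ, hw.choose_spec, dotProduct_comp_smul,
    hΔσ, map_mul, pow_two, mul_div_mul_left _ _ hΔ]

theorem lam_eq_mk_div (hσ : Function.Involutive σ) (hH : (H.map σ)ᵀ = H) {Δ : R} (hΔ0 : Δ ≠ 0)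
    (hΔσ : σ Δ = Δ)
    {x y : Submodule.torsion R ((m → R) ⧸ LinearMap.range (H.map σ).mulVecLin)}
    {v w v₀ w₀ : m → R} (hx : Submodule.Quotient.mk v = x.val)
    (hy : Submodule.Quotient.mk w = y.val)
    (hv : H.map σ *ᵥ v₀ = Δ • v) (hw : H.map σ *ᵥ w₀ = Δ • w) :
    lam H σ Δ x y = QuotientAddGroup.mk
      (algebraMap R (FractionRing R) (v₀ ⬝ᵥ (σ ∘ w)) / algebraMap R (FractionRing R) Δ) := by
  have lift_of_sub_mem {u u' u₀ : m → R} (hu : H.map σ *ᵥ u₀ = Δ • u)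
      (h : u' - u ∈ LinearMap.range (H.map σ).mulVecLin) :
      ∃ u₀', H.map σ *ᵥ u₀' = Δ • u' := by
    obtain ⟨s, hs⟩ := h
    exact ⟨u₀ + Δ • s, by
      rw [mulVec_add, mulVec_smul, hu, ← mulVecLin_apply, hs, ← smul_add, add_sub_cancel]⟩
  have hvx := (Submodule.Quotient.eq _).mp ((Quotient.out_eq x.val).trans hx.symm)
  have hwy := (Submodule.Quotient.eq _).mp ((Quotient.out_eq y.val).trans hy.symm)
  obtain ⟨w₀', hw'⟩ := lift_of_sub_mem hw hwy
  obtain ⟨v₀', hv', hlam⟩ :=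
    exists_lamVal_eq_div hσ hΔ0 hΔσ (lift_of_sub_mem hv hvx) ⟨w₀', hw'⟩
  rw [lam, hlam]
  exact mk_div_eq_mk_div_of_dvd_sub (by simpa using hΔ0)
    (dvd_dotProduct_comp_sub hσ hH hΔ0 hΔσ hv' hv hw' hvx hwy)

end Pairing

section Extension

variable {R : Type*} [CommRing R] {n : ℕ} {σ : R →+* R} {H : Matrix (Fin n) (Fin n) R}

theorem transpose_map_extMat (hσ : Function.Involutive σ) (hH : (H.map σ)ᵀ = H) (ξ : Fin n → R)
    {μ : R} (hμ : σ μ = μ) (a : R) :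
    ((extMat σ H ξ μ a).map σ)ᵀ = extMat σ H ξ μ a := by
  rw [extMat, fromBlocks_map, fromBlocks_transpose, hH]
  congr 1
  · ext i j
    fin_cases j <;> simp [hσ _]
  · ext i j
    fin_cases i <;> simp
  · ext i j
    fin_cases i <;> fin_cases j <;> simp [hμ, hσ _]

theorem map_extMat_mulVec_eq_iff (hσ : Function.Involutive σ) {ξ : Fin n → R} {μ a : R}
    {u v : Fin n ⊕ Fin 2 → R} :
    (extMat σ H ξ μ a).map σ *ᵥ u = v ↔
      H.map σ *ᵥ (u ∘ Sum.inl) + u (Sum.inr 0) • (σ ∘ ξ) = v ∘ Sum.inl ∧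
      ξ ⬝ᵥ (u ∘ Sum.inl) + (σ μ * u (Sum.inr 0) + σ a * u (Sum.inr 1)) = v (Sum.inr 0) ∧
      a * u (Sum.inr 0) = v (Sum.inr 1) := by
  simp [funext_iff, extMat, mulVec, dotProduct, hσ _, mul_comm]

/-- The map `(v, s, t) ↦ v - α⁻¹ t ξ̄` from `R^(n+2)` to `R^n`, which is left after solving
`H̄' u' = (v, s, t)` for the last two entries of `u'`. -/
def extReduction (σ : R →+* R) (ξ : Fin n → R) (a : Rˣ) :
    (Fin n ⊕ Fin 2 → R) →ₗ[R] (Fin n → R) :=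
  LinearMap.funLeft R R Sum.inl -
    (LinearMap.proj (Sum.inr 1)).smulRight ((↑a⁻¹ : R) • (σ ∘ ξ))

theorem extReduction_apply (ξ : Fin n → R) (a : Rˣ) (v : Fin n ⊕ Fin 2 → R) :
    extReduction σ ξ a v = v ∘ Sum.inl - (v (Sum.inr 1) * ↑a⁻¹) • (σ ∘ ξ) := by
  rw [mul_smul]
  rfl

theorem extReduction_sumElim_zero (ξ : Fin n → R) (a : Rˣ) (v : Fin n → R) :
    extReduction σ ξ a (Sum.elim v 0) = v := by
  simp [extReduction_apply]

theorem map_mulVec_comp_inl_eq_extReduction (hσ : Function.Involutive σ) {ξ : Fin n → R}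
    {μ : R} {a : Rˣ} {u v : Fin n ⊕ Fin 2 → R} (h : (extMat σ H ξ μ a).map σ *ᵥ u = v) :
    H.map σ *ᵥ (u ∘ Sum.inl) = extReduction σ ξ a v := by
  obtain ⟨hfst, -, hlast⟩ := (map_extMat_mulVec_eq_iff hσ).mp h
  rw [extReduction_apply, ← hfst, ← hlast, mul_comm (a : R), Units.mul_inv_cancel_right,
    add_sub_cancel_right]

theorem exists_map_extMat_mulVec_eq_iff (hσ : Function.Involutive σ) {ξ : Fin n → R} {μ : R}
    {a : Rˣ} {v : Fin n ⊕ Fin 2 → R} :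
    (∃ u, (extMat σ H ξ μ a).map σ *ᵥ u = v) ↔ ∃ u, H.map σ *ᵥ u = extReduction σ ξ a v := by
  refine ⟨fun ⟨u, hu⟩ => ⟨u ∘ Sum.inl, map_mulVec_comp_inl_eq_extReduction hσ hu⟩,
    fun ⟨u, hu⟩ => ?_⟩
  let p := v (Sum.inr 1) * ↑a⁻¹
  have hσa : σ a * σ ↑a⁻¹ = 1 := by rw [← map_mul, Units.mul_inv, map_one]
  refine ⟨Sum.elim u ![p, σ ↑a⁻¹ * (v (Sum.inr 0) - ξ ⬝ᵥ u - σ μ * p)],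
    (map_extMat_mulVec_eq_iff hσ).mpr ⟨?_, ?_, ?_⟩⟩
  · simp [hu, extReduction_apply, p]
  · simp only [Sum.elim_comp_inl, Sum.elim_inr, cons_val_zero, cons_val_one]
    linear_combination (v (Sum.inr 0) - ξ ⬝ᵥ u - σ μ * p) * hσa
  · simp [p, mul_comm (v _)]

theorem torsionClass_extReduction (hσ : Function.Involutive σ) {ξ : Fin n → R} {μ : R} {a : Rˣ}
    {v : Fin n ⊕ Fin 2 → R} (hv : torsionClass ((extMat σ H ξ μ a).map σ) v) :
    torsionClass (H.map σ) (extReduction σ ξ a v) := by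
  obtain ⟨r, hr, h⟩ := hv
  exact ⟨r, hr, by rwa [← map_smul, ← exists_map_extMat_mulVec_eq_iff hσ]⟩

theorem exists_map_extMat_mulVec_eq_smul (hσ : Function.Involutive σ) {Δ : R}
    (hΔann : ∀ v, torsionClass (H.map σ) v → ∃ v₀, H.map σ *ᵥ v₀ = Δ • v) {ξ : Fin n → R} {μ : R}
    {a : Rˣ} (v : Fin n ⊕ Fin 2 → R) (hv : torsionClass ((extMat σ H ξ μ a).map σ) v) :
    ∃ v₀, (extMat σ H ξ μ a).map σ *ᵥ v₀ = Δ • v := by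
  rw [exists_map_extMat_mulVec_eq_iff hσ, map_smul]
  exact hΔann _ (torsionClass_extReduction hσ hv)

theorem exists_lift_sumElim_zero (hσ : Function.Involutive σ) (ξ : Fin n → R) (μ : R) (a : Rˣ)
    {Δ : R} {v : Fin n → R} (hv : ∃ v₀, H.map σ *ᵥ v₀ = Δ • v) :
    ∃ v₀, (extMat σ H ξ μ a).map σ *ᵥ v₀ = Δ • Sum.elim v 0 ∧
      H.map σ *ᵥ (v₀ ∘ Sum.inl) = Δ • v := by
  have hred : extReduction σ ξ a (Δ • Sum.elim v 0) = Δ • v := by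
    rw [map_smul, extReduction_sumElim_zero]
  obtain ⟨v₀, hv₀⟩ := (exists_map_extMat_mulVec_eq_iff hσ (μ := μ)).mpr (hred ▸ hv)
  exact ⟨v₀, hv₀, (map_mulVec_comp_inl_eq_extReduction hσ hv₀).trans hred⟩

theorem ker_mkQ_comp_extReduction (hσ : Function.Involutive σ) (ξ : Fin n → R) (μ : R) (a : Rˣ) :
    LinearMap.ker ((LinearMap.range (H.map σ).mulVecLin).mkQ ∘ₗ extReduction σ ξ a) =
      LinearMap.range ((extMat σ H ξ μ a).map σ).mulVecLin := by
  rw [LinearMap.ker_comp, Submodule.ker_mkQ]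
  ext v
  exact (exists_map_extMat_mulVec_eq_iff hσ).symm

/-- The isomorphism from the cokernel of `H̄` to that of `H̄'` given by `[v] ↦ [(v, 0, 0)]`,
constructed as the inverse of the map induced by `extReduction`. -/
noncomputable def extCokerEquiv (hσ : Function.Involutive σ) (H : Matrix (Fin n) (Fin n) R)
    (ξ : Fin n → R) (μ : R) (a : Rˣ) :
    ((Fin n → R) ⧸ LinearMap.range (H.map σ).mulVecLin) ≃ₗ[R]
      ((Fin n ⊕ Fin 2 → R) ⧸ LinearMap.range ((extMat σ H ξ μ a).map σ).mulVecLin) :=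
  ((Submodule.quotEquivOfEq _ _ (ker_mkQ_comp_extReduction hσ ξ μ a).symm).trans
    (LinearMap.quotKerEquivOfSurjective _ ((Submodule.mkQ_surjective _).comp
      fun v => ⟨Sum.elim v 0, extReduction_sumElim_zero ξ a v⟩))).symm

theorem extCokerEquiv_mk (hσ : Function.Involutive σ) (ξ : Fin n → R) (μ : R) (a : Rˣ)
    (v : Fin n → R) :
    extCokerEquiv hσ H ξ μ a (Submodule.Quotient.mk v) =
      Submodule.Quotient.mk (Sum.elim v 0) := by
  rw [extCokerEquiv, LinearEquiv.symm_apply_eq, LinearEquiv.trans_apply,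
    Submodule.quotEquivOfEq_mk, LinearMap.quotKerEquivOfSurjective_apply_mk,
    LinearMap.comp_apply, extReduction_sumElim_zero, Submodule.mkQ_apply]

theorem lam_extCokerEquiv [IsDomain R] (hσ : Function.Involutive σ) (hH : (H.map σ)ᵀ = H) {Δ : R}
    (hΔ0 : Δ ≠ 0) (hΔσ : σ Δ = Δ)
    (hΔann : ∀ v, torsionClass (H.map σ) v → ∃ v₀, H.map σ *ᵥ v₀ = Δ • v) (ξ : Fin n → R)
    {μ : R} (hμ : σ μ = μ) (a : Rˣ)
    {x y : Submodule.torsion R ((Fin n → R) ⧸ LinearMap.range (H.map σ).mulVecLin)}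
    {x' y' : Submodule.torsion R
      ((Fin n ⊕ Fin 2 → R) ⧸ LinearMap.range ((extMat σ H ξ μ a).map σ).mulVecLin)}
    (hx : extCokerEquiv hσ H ξ μ a x = x'.val) (hy : extCokerEquiv hσ H ξ μ a y = y'.val) :
    lam (extMat σ H ξ μ a) σ Δ x' y' = lam H σ Δ x y := by
  obtain ⟨v, hv⟩ := Submodule.Quotient.mk_surjective _ x.val
  obtain ⟨w, hw⟩ := Submodule.Quotient.mk_surjective _ y.val
  rw [← hv, extCokerEquiv_mk] at hx
  rw [← hw, extCokerEquiv_mk] at hy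
  have exists_lift {u : Fin n → R} (hu : Submodule.Quotient.mk u ∈ Submodule.torsion R _) :=
    exists_lift_sumElim_zero hσ ξ μ a (hΔann u (mk_mem_torsion_iff_torsionClass.mp hu))
  obtain ⟨v₀, hv₀', hv₀⟩ := exists_lift (hv ▸ x.property)
  obtain ⟨w₀, hw₀', hw₀⟩ := exists_lift (hw ▸ y.property)
  have hpair : v₀ ⬝ᵥ (σ ∘ Sum.elim w 0) = (v₀ ∘ Sum.inl) ⬝ᵥ (σ ∘ w) := by
    simp [dotProduct]
  rw [lam_eq_mk_div hσ (transpose_map_extMat hσ hH ξ hμ a) hΔ0 hΔσ hx hy hv₀' hw₀',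
    lam_eq_mk_div hσ hH hΔ0 hΔσ hv hw hv₀ hw₀, hpair]

end Extension

theorem lambda_extension_isometric_general
    {R : Type*} [CommRing R] [IsDomain R]
    (σ : R →+* R) (hσ : Function.Involutive σ)
    {n : ℕ} (H : Matrix (Fin n) (Fin n) R) (hH : (H.map σ)ᵀ = H)
    (Δ : R) (hΔ0 : Δ ≠ 0) (hΔσ : σ Δ = Δ)
    (hΔann : ∀ v : Fin n → R, torsionClass (H.map σ) v →
      ∃ v₀ : Fin n → R, (H.map σ) *ᵥ v₀ = Δ • v)
    (ξ : Fin n → R) (μ : R) (hμ : σ μ = μ) (a : Rˣ) :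
    ((extMat σ H ξ μ (a : R)).map σ)ᵀ = extMat σ H ξ μ (a : R) ∧
    (∀ v' : (Fin n ⊕ Fin 2) → R, torsionClass ((extMat σ H ξ μ (a : R)).map σ) v' →
      ∃ v₀' : (Fin n ⊕ Fin 2) → R, ((extMat σ H ξ μ (a : R)).map σ) *ᵥ v₀' = Δ • v') ∧
    ∃ φ : Submodule.torsion R ((Fin n → R) ⧸ LinearMap.range (H.map σ).mulVecLin) ≃ₗ[R]
        Submodule.torsion R (((Fin n ⊕ Fin 2) → R) ⧸
          LinearMap.range ((extMat σ H ξ μ (a : R)).map σ).mulVecLin),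
      ∀ x y, lam (extMat σ H ξ μ (a : R)) σ Δ (φ x) (φ y) = lam H σ Δ x y := by
  refine ⟨transpose_map_extMat hσ hH ξ hμ a, exists_map_extMat_mulVec_eq_smul hσ hΔann,
    (extCokerEquiv hσ H ξ μ a).ofSubmodules _ _ (map_torsion_linearEquiv _),
    fun _ _ => lam_extCokerEquiv hσ hH hΔ0 hΔσ hΔann ξ hμ a rfl rfl⟩

/-- for `H'` as above with `α` a unit and `μ̄ = μ`, the matrix `H'` is
hermitian, `Δ` annihilates the torsion of the cokernel of `H̄'` (and so defines `λ_{H'}`),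
and the pairings `λ_{H'}` and `λ_H` are isometric via an `R`-module isomorphism `φ` of the
torsion submodules. -/
theorem lambda_extension_isometric
    {R : Type*} [CommRing R] [IsDomain R] [IsNoetherianRing R] [UniqueFactorizationMonoid R]
    (σ : R →+* R) (hσ : Function.Involutive σ)
    {n : ℕ} (H : Matrix (Fin n) (Fin n) R) (hH : (H.map σ)ᵀ = H)
    (Δ : R) (hΔ0 : Δ ≠ 0) (hΔσ : σ Δ = Δ)
    (hΔann : ∀ v : Fin n → R, torsionClass (H.map σ) v →
      ∃ v₀ : Fin n → R, (H.map σ) *ᵥ v₀ = Δ • v)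
    (ξ : Fin n → R) (μ : R) (hμ : σ μ = μ) (a : Rˣ) :
    -- `H'` is hermitian
    ((extMat σ H ξ μ (a : R)).map σ)ᵀ = extMat σ H ξ μ (a : R) ∧
    -- `Δ` annihilates the torsion submodule of the cokernel of `H̄'`
    (∀ v' : (Fin n ⊕ Fin 2) → R, torsionClass ((extMat σ H ξ μ (a : R)).map σ) v' →
      ∃ v₀' : (Fin n ⊕ Fin 2) → R, ((extMat σ H ξ μ (a : R)).map σ) *ᵥ v₀' = Δ • v') ∧
    -- the torsion submodules are isomorphic via an isometry `φ` between `λ_H` and `λ_{H'}`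
    ∃ φ : Submodule.torsion R ((Fin n → R) ⧸ LinearMap.range (H.map σ).mulVecLin) ≃ₗ[R]
        Submodule.torsion R (((Fin n ⊕ Fin 2) → R) ⧸
          LinearMap.range ((extMat σ H ξ μ (a : R)).map σ).mulVecLin),
      ∀ x y, lam (extMat σ H ξ μ (a : R)) σ Δ (φ x) (φ y) = lam H σ Δ x y :=
  lambda_extension_isometric_general σ hσ H hH Δ hΔ0 hΔσ hΔann ξ μ hμ a
end

section
/- Let P be an invertible n×n matrix over R. Then PᵀHP̄ is hermitian, the map x ↦ P̄ᵀx induces an R-module isomorphism from R^n/H̄R^n onto R^n/(P̄ᵀH̄P)R^n restricting to an isomorphism of torsion submodules, Δ annihilates the torsion submodule of R^n/(P̄ᵀH̄P)R^n and so defines λ_{PᵀHP̄}, and this isomorphism is an isometry: λ_{PᵀHP̄}([P̄ᵀx],[P̄ᵀy]) = λ_H([x],[y]) for all torsion classes [x], [y]. -/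
open Matrix

/-! Conjugating the congruent matrix gives `P̄ᵀH̄P`, so `(P̄ᵀH̄P)u = P̄ᵀv` says exactly that
`H̄(Pu) = v`, and `Pu` runs over `Rⁿ` together with `u`. Hence a lift `X₀` of `Δ • P̄ᵀx` through
`P̄ᵀH̄P` gives the lift `PX₀` of `Δ • x` through `H̄`. Moreover `X₀ᵀ(PᵀHP̄)Ȳ₀ = (PX₀)ᵀH(PY₀)‾`, and
for hermitian `H` the value `x₀ᵀHȳ₀` depends only on `H̄x₀` and `H̄y₀`. The two pairings therefore
agree on representatives already in `Q(R)`. -/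

section Equivalence

variable {R j k l m : Type*} [NonUnitalSemiring R] [Fintype k] [Fintype l] [Fintype m]

theorem mul_mul_mulVec_eq_mulVec_iff {Q : Matrix j k R} (hQ : Function.Injective Q.mulVec)
    (A : Matrix k l R) (P : Matrix l m R) (u : m → R) (v : k → R) :
    (Q * A * P) *ᵥ u = Q *ᵥ v ↔ A *ᵥ (P *ᵥ u) = v := by
  rw [← mulVec_mulVec, ← mulVec_mulVec, hQ.eq_iff]

theorem mulVec_mem_range_mul_mul_iff {Q : Matrix j k R} (hQ : Function.Injective Q.mulVec)
    (A : Matrix k l R) {P : Matrix l m R} (hP : Function.Surjective P.mulVec) (v : k → R) :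
    Q *ᵥ v ∈ Set.range (Q * A * P).mulVec ↔ v ∈ Set.range A.mulVec := by
  simp only [Set.mem_range, mul_mul_mulVec_eq_mulVec_iff hQ, hP.exists]

end Equivalence

theorem mulVec_bijective_of_isUnit {R m : Type*} [Semiring R] [Fintype m] [DecidableEq m]
    {M : Matrix m m R} (hM : IsUnit M) : Function.Bijective M.mulVec :=
  ⟨mulVec_injective_of_isUnit hM,
    mulVec_surjective_iff_exists_right_inverse.2 hM.exists_right_inv⟩

section Torsion

variable {R m : Type*} [CommRing R] [Fintype m] {P Q : Matrix m m R}

theorem torsionClass_mul_mul_mulVec_iff (hQ : Function.Injective Q.mulVec) (A : Matrix m m R)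
    (hP : Function.Surjective P.mulVec) (v : m → R) :
    torsionClass (Q * A * P) (Q *ᵥ v) ↔ torsionClass A v := by
  refine exists_congr fun r ↦ and_congr_right' ?_
  rw [← mulVec_smul]
  exact mulVec_mem_range_mul_mul_iff hQ A hP (r • v)

theorem smul_mem_range_mul_mul_of_torsionClass (hQ : Function.Bijective Q.mulVec)
    {A : Matrix m m R} (hP : Function.Surjective P.mulVec) {c : R}
    (hA : ∀ v, torsionClass A v → c • v ∈ Set.range A.mulVec) {v : m → R}
    (hv : torsionClass (Q * A * P) v) : c • v ∈ Set.range (Q * A * P).mulVec := by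
  obtain ⟨u, rfl⟩ := hQ.surjective v
  rw [← mulVec_smul, mulVec_mem_range_mul_mul_iff hQ.injective A hP]
  exact hA u ((torsionClass_mul_mul_mulVec_iff hQ.injective A hP u).1 hv)

end Torsion

section Conjugation

variable {R l m : Type*}

theorem map_map_of_involutive {σ : R → R} (hσ : Function.Involutive σ) (M : Matrix l m R) :
    (M.map σ).map σ = M := by
  rw [Matrix.map_map, hσ.comp_self, Matrix.map_id]

theorem map_transpose_mul_mul_map [NonAssocSemiring R] [Fintype l] {σ : R →+* R}
    (hσ : Function.Involutive σ) (H : Matrix l l R) (P : Matrix l m R) :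
    (Pᵀ * H * P.map σ).map σ = (P.map σ)ᵀ * H.map σ * P := by
  rw [Matrix.map_mul, Matrix.map_mul, map_map_of_involutive hσ, transpose_map]

theorem hermitian_transpose_mul_mul_map [CommSemiring R] [Fintype l] {σ : R →+* R}
    (hσ : Function.Involutive σ) {H : Matrix l l R} (hH : (H.map σ)ᵀ = H) (P : Matrix l m R) :
    ((Pᵀ * H * P.map σ).map σ)ᵀ = Pᵀ * H * P.map σ := by
  rw [map_transpose_mul_mul_map hσ, transpose_mul, transpose_mul, hH, transpose_transpose,
    Matrix.mul_assoc]

end Conjugation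

theorem map_comp_mulVec {R S l m : Type*} [NonAssocSemiring R] [NonAssocSemiring S] [Fintype m]
    (σ : R →+* S) (M : Matrix l m R) (v : m → R) : σ ∘ (M *ᵥ v) = M.map σ *ᵥ (σ ∘ v) :=
  funext (σ.map_mulVec M v)

section SesquilinearForm

variable {R l m : Type*} [CommSemiring R] [Fintype l] {σ : R →+* R}

theorem dotProduct_transpose_mul_mul_map_mulVec [Fintype m] (H : Matrix l l R) (P : Matrix l m R)
    (x y : m → R) :
    x ⬝ᵥ ((Pᵀ * H * P.map σ) *ᵥ (σ ∘ y)) = (P *ᵥ x) ⬝ᵥ (H *ᵥ (σ ∘ (P *ᵥ y))) := by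
  rw [← mulVec_mulVec, ← mulVec_mulVec, map_comp_mulVec, dotProduct_mulVec, vecMul_transpose]

theorem dotProduct_mulVec_congr_of_hermitian (hσ : Function.Involutive σ) {H : Matrix l l R}
    (hH : (H.map σ)ᵀ = H) {x x' y y' : l → R} (hx : H.map σ *ᵥ x = H.map σ *ᵥ x')
    (hy : H.map σ *ᵥ y = H.map σ *ᵥ y') :
    x ⬝ᵥ (H *ᵥ (σ ∘ y)) = x' ⬝ᵥ (H *ᵥ (σ ∘ y')) := by
  have mulVec_comp_eq (v : l → R) : H *ᵥ (σ ∘ v) = σ ∘ (H.map σ *ᵥ v) := by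
    rw [map_comp_mulVec, map_map_of_involutive hσ]
  have vecMul_eq (v : l → R) : v ᵥ* H = H.map σ *ᵥ v := by
    rw [← vecMul_transpose, hH]
  calc
    x ⬝ᵥ (H *ᵥ (σ ∘ y)) = x ⬝ᵥ (H *ᵥ (σ ∘ y')) := by rw [mulVec_comp_eq, hy, ← mulVec_comp_eq]
    _ = x' ⬝ᵥ (H *ᵥ (σ ∘ y')) := by
      rw [dotProduct_mulVec, vecMul_eq, hx, ← vecMul_eq, ← dotProduct_mulVec]

end SesquilinearForm

theorem lambda_congruence_general {R m : Type*} [CommRing R] [Fintype m] [DecidableEq m]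
    (σ : R →+* R) (hσ : Function.Involutive σ) (H : Matrix m m R) (hH : (H.map σ)ᵀ = H) (Δ : R)
    (hΔann : ∀ v : m → R, torsionClass (H.map σ) v → ∃ v₀ : m → R, (H.map σ) *ᵥ v₀ = Δ • v)
    (P : Matrix m m R) (hP : IsUnit P.det) :
    ((Pᵀ * H * P.map σ).map σ)ᵀ = Pᵀ * H * P.map σ ∧
    (∀ v : m → R, (∃ w : m → R, (H.map σ) *ᵥ w = v) ↔
      (∃ w : m → R, ((Pᵀ * H * P.map σ).map σ) *ᵥ w = (P.map σ)ᵀ *ᵥ v)) ∧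
    (∀ v' : m → R, ∃ v : m → R, ∃ w : m → R,
      ((Pᵀ * H * P.map σ).map σ) *ᵥ w = v' - (P.map σ)ᵀ *ᵥ v) ∧
    (∀ v : m → R, torsionClass (H.map σ) v ↔
      torsionClass ((Pᵀ * H * P.map σ).map σ) ((P.map σ)ᵀ *ᵥ v)) ∧
    (∀ v : m → R, torsionClass ((Pᵀ * H * P.map σ).map σ) v →
      ∃ v₀ : m → R, ((Pᵀ * H * P.map σ).map σ) *ᵥ v₀ = Δ • v) ∧
    (∀ x y x₀ y₀ X₀ Y₀ : m → R,
      (H.map σ) *ᵥ x₀ = Δ • x → (H.map σ) *ᵥ y₀ = Δ • y →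
      ((Pᵀ * H * P.map σ).map σ) *ᵥ X₀ = Δ • ((P.map σ)ᵀ *ᵥ x) →
      ((Pᵀ * H * P.map σ).map σ) *ᵥ Y₀ = Δ • ((P.map σ)ᵀ *ᵥ y) →
      X₀ ⬝ᵥ ((Pᵀ * H * P.map σ) *ᵥ (σ ∘ Y₀)) = x₀ ⬝ᵥ (H *ᵥ (σ ∘ y₀))) := by
  have hPunit : IsUnit P := (isUnit_iff_isUnit_det P).2 hP
  have hPsurj : Function.Surjective P.mulVec := (mulVec_bijective_of_isUnit hPunit).surjective
  have hQ : Function.Bijective ((P.map σ)ᵀ).mulVec :=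
    mulVec_bijective_of_isUnit ((isUnit_transpose _).2 (hPunit.map σ.mapMatrix))
  refine ⟨hermitian_transpose_mul_mul_map hσ hH P, ?_⟩
  rw [map_transpose_mul_mul_map hσ]
  refine ⟨fun v ↦ (mulVec_mem_range_mul_mul_iff hQ.injective _ hPsurj v).symm, fun v' ↦ ?_,
    fun v ↦ (torsionClass_mul_mul_mulVec_iff hQ.injective _ hPsurj v).symm,
    fun v ↦ smul_mem_range_mul_mul_of_torsionClass hQ hPsurj hΔann, ?_⟩
  · obtain ⟨v, rfl⟩ := hQ.surjective v'
    exact ⟨v, 0, by rw [mulVec_zero, sub_self]⟩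
  · intro x y x₀ y₀ X₀ Y₀ hx hy hX hY
    rw [← mulVec_smul, mul_mul_mulVec_eq_mulVec_iff hQ.injective] at hX hY
    rw [dotProduct_transpose_mul_mul_map_mulVec]
    exact dotProduct_mulVec_congr_of_hermitian hσ hH (hX.trans hx.symm) (hY.trans hy.symm)

/-- for an invertible matrix `P` over `R`, the matrix `PᵀHP̄` is hermitian,
`x ↦ P̄ᵀx` induces an isomorphism `Rⁿ/H̄Rⁿ ≅ Rⁿ/(P̄ᵀH̄P)Rⁿ` restricting to an isomorphism
of torsion submodules, `Δ` annihilates the torsion of the new cokernel (and so defines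
`λ_{PᵀHP̄}`), and this isomorphism is an isometry. -/
theorem lambda_congruence
    {R : Type*} [CommRing R] [IsDomain R] [IsNoetherianRing R] [UniqueFactorizationMonoid R]
    (σ : R →+* R) (hσ : Function.Involutive σ)
    {n : ℕ} (H : Matrix (Fin n) (Fin n) R) (hH : (H.map σ)ᵀ = H)
    (Δ : R) (hΔ0 : Δ ≠ 0) (hΔσ : σ Δ = Δ)
    (hΔann : ∀ v : Fin n → R, torsionClass (H.map σ) v →
      ∃ v₀ : Fin n → R, (H.map σ) *ᵥ v₀ = Δ • v)
    (P : Matrix (Fin n) (Fin n) R) (hP : IsUnit P.det) :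
    -- `PᵀHP̄` is hermitian
    ((Pᵀ * H * P.map σ).map σ)ᵀ = Pᵀ * H * P.map σ ∧
    -- `x ↦ P̄ᵀx` identifies `H̄Rⁿ` with `(P̄ᵀH̄P)Rⁿ` and is onto modulo `(P̄ᵀH̄P)Rⁿ`
    (∀ v : Fin n → R,
      (∃ w : Fin n → R, (H.map σ) *ᵥ w = v) ↔
      (∃ w : Fin n → R, ((Pᵀ * H * P.map σ).map σ) *ᵥ w = (P.map σ)ᵀ *ᵥ v)) ∧
    (∀ v' : Fin n → R, ∃ v : Fin n → R, ∃ w : Fin n → R,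
      ((Pᵀ * H * P.map σ).map σ) *ᵥ w = v' - (P.map σ)ᵀ *ᵥ v) ∧
    -- `x ↦ P̄ᵀx` preserves torsion classes in both directions
    (∀ v : Fin n → R, torsionClass (H.map σ) v ↔
      torsionClass ((Pᵀ * H * P.map σ).map σ) ((P.map σ)ᵀ *ᵥ v)) ∧
    -- `Δ` annihilates the torsion of the cokernel of `P̄ᵀH̄P`
    (∀ v : Fin n → R, torsionClass ((Pᵀ * H * P.map σ).map σ) v →
      ∃ v₀ : Fin n → R, ((Pᵀ * H * P.map σ).map σ) *ᵥ v₀ = Δ • v) ∧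
    -- the isomorphism is an isometry: `λ_{PᵀHP̄}([P̄ᵀx],[P̄ᵀy]) = λ_H([x],[y])` in `Q(R)/R`
    (∀ x y x₀ y₀ X₀ Y₀ : Fin n → R,
      torsionClass (H.map σ) x → torsionClass (H.map σ) y →
      (H.map σ) *ᵥ x₀ = Δ • x → (H.map σ) *ᵥ y₀ = Δ • y →
      ((Pᵀ * H * P.map σ).map σ) *ᵥ X₀ = Δ • ((P.map σ)ᵀ *ᵥ x) →
      ((Pᵀ * H * P.map σ).map σ) *ᵥ Y₀ = Δ • ((P.map σ)ᵀ *ᵥ y) →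
      ∃ r : R, algebraMap R (FractionRing R) r =
        algebraMap R (FractionRing R) (X₀ ⬝ᵥ ((Pᵀ * H * P.map σ) *ᵥ (σ ∘ Y₀))) /
          (algebraMap R (FractionRing R) Δ) ^ 2 -
        algebraMap R (FractionRing R) (x₀ ⬝ᵥ (H *ᵥ (σ ∘ y₀))) /
          (algebraMap R (FractionRing R) Δ) ^ 2) := by
  obtain ⟨hherm, hrange, hsurj, htors, hann, hform⟩ :=
    lambda_congruence_general σ hσ H hH Δ hΔann P hP
  exact ⟨hherm, hrange, hsurj, htors, hann, fun x y x₀ y₀ X₀ Y₀ _ _ hx hy hX hY ↦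
    ⟨0, by rw [hform x y x₀ y₀ X₀ Y₀ hx hy hX hY, map_zero, sub_self]⟩⟩
end

section
/- For every m ∈ ℤ and every class [x] ∈ H^m(D) whose image in H^m(J) vanishes, there exists a class [k] ∈ H^{m−1}(K) with δ_K^h([k]) = v_D([x]); that is, v_D maps ker(H^m(D) → H^m(J)) into the image of the connecting homomorphism δ_K^h : H^{m−1}(K) → H^m(H). -/
open CategoryTheory HomologicalComplex

theorem vD_ker_into_image_of_delta_general {R : Type*} [Ring R] {ι : Type*} {c : ComplexShape ι}
    {S : ShortComplex (HomologicalComplex (ModuleCat R) c)} (hS : S.ShortExact)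
    {D : HomologicalComplex (ModuleCat R) c} (φ : D ⟶ S.X₁) {i j : ι} (hij : c.Rel i j)
    (x : D.homology j) :
    (∃ k : S.X₃.homology i, hS.δ i j hij k = homologyMap φ j x) ↔
      homologyMap (φ ≫ S.f) j x = 0 := by
  have exact_at_X₁ := (ShortComplex.ShortExact.moduleCat_exact_iff_function_exact _).mp
    (hS.homology_exact₁ i j hij)
  rw [homologyMap_comp]
  exact (exact_at_X₁ (homologyMap φ j x)).symm

/-- in a 3×3 diagram of cochain complexes with exact rows and columns,
`v_D` maps `ker(H^m(D) → H^m(J))` into the image of the connecting homomorphism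
`δ_K^h : H^{m−1}(K) → H^m(H)` of the bottom row. -/
theorem vD_ker_into_image_of_delta
    {R : Type*} [CommRing R]
    (A B C D E F G J K : CochainComplex (ModuleCat R) ℤ)
    (hAB : A ⟶ B) (hBC : B ⟶ C) (hDE : D ⟶ E) (hEF : E ⟶ F) (hGJ : G ⟶ J) (hJK : J ⟶ K)
    (vAD : A ⟶ D) (vDG : D ⟶ G) (vBE : B ⟶ E) (vEJ : E ⟶ J) (vCF : C ⟶ F) (vFK : F ⟶ K)
    (w₁ : hAB ≫ hBC = 0) (w₂ : hDE ≫ hEF = 0) (w₃ : hGJ ≫ hJK = 0)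
    (w₄ : vAD ≫ vDG = 0) (w₅ : vBE ≫ vEJ = 0) (w₆ : vCF ≫ vFK = 0)
    (row₁ : (ShortComplex.mk hAB hBC w₁).ShortExact)
    (row₂ : (ShortComplex.mk hDE hEF w₂).ShortExact)
    (row₃ : (ShortComplex.mk hGJ hJK w₃).ShortExact)
    (col₁ : (ShortComplex.mk vAD vDG w₄).ShortExact)
    (col₂ : (ShortComplex.mk vBE vEJ w₅).ShortExact)
    (col₃ : (ShortComplex.mk vCF vFK w₆).ShortExact)
    (sq₁ : hAB ≫ vBE = vAD ≫ hDE) (sq₂ : hBC ≫ vCF = vBE ≫ hEF)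
    (sq₃ : hDE ≫ vEJ = vDG ≫ hGJ) (sq₄ : hEF ≫ vFK = vEJ ≫ hJK)
    (m : ℤ) (x : D.homology m)
    (hx : homologyMap (vDG ≫ hGJ) m x = 0) :
    ∃ k : K.homology (m - 1),
      row₃.δ (m - 1) m (by simp only [ComplexShape.up_Rel]; omega) k =
        homologyMap vDG m x :=
  (vD_ker_into_image_of_delta_general row₃ vDG _ x).mpr hx
end

section
/- Let m ∈ ℤ and let [x] ∈ H^m(D) be a class whose image in H^m(J) vanishes. Then for every [b] ∈ H^m(B) with v_B([b]) = h_D([x]) and every [k] ∈ H^{m−1}(K) with δ_K^h([k]) = v_D([x]), the element h_B([b]) + δ_K^v([k]) of H^m(C) lies in the image of the composite δ_K^v ∘ h_J : H^{m−1}(J) → H^m(C). (This is the elementwise form of the anticommutativity of the square h_B ∘ v_B^{−1} ∘ h_D = −δ_K^v ∘ (δ_K^h)^{−1} ∘ v_D on ker(H^m(D) → H^m(J)).) -/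
open CategoryTheory HomologicalComplex

/-!
Represent `b` and `x` by cocycles with `h x = v b + d e` for a cochain `e` of `E`. The image `κ`
of `e` in `K` is then a cocycle, and computing the two connecting homomorphisms through the lifts
`v e` of `κ` to `J` and `h e` of `κ` to `F` gives `δʰ κ = v x` and `δᵛ κ = -h b`. A class `k` with
`δʰ k = v x` differs from `κ` by an element of `ker δʰ`, the image of the cohomology of `J`.

The argument is carried out with generalized elements `T ⟶ X` in an abelian category, where choosing
a preimage means passing to an epimorphism `T' ⟶ T`.
-/

open Limits

section Abelian

variable {𝒜 ι : Type*} [Category* 𝒜] [Abelian 𝒜] {c : ComplexShape ι} {i j : ι} {T : 𝒜}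

lemma comp_homologyπ_comp_δ_of_lift {S : ShortComplex (HomologicalComplex 𝒜 c)} (hS : S.ShortExact)
    (hij : c.Rel i j) (z₃ : T ⟶ S.X₃.cycles i) (x₂ : T ⟶ S.X₂.X i) (z₁ : T ⟶ S.X₁.cycles j)
    (h₃ : x₂ ≫ S.g.f i = z₃ ≫ S.X₃.iCycles i)
    (h₁ : z₁ ≫ S.X₁.iCycles j ≫ S.f.f j = x₂ ≫ S.X₂.d i j) :
    (z₃ ≫ S.X₃.homologyπ i) ≫ hS.δ i j hij = z₁ ≫ S.X₁.homologyπ j := by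
  refine hS.δ_eq' i j hij _ (x₂ ≫ S.X₂.pOpcycles i) z₁ ?_ ?_
  · simp [reassoc_of% h₃]
  · simp [← cancel_mono (S.X₂.iCycles j), h₁]

variable {B C D E F G J K : HomologicalComplex 𝒜 c}
  {hBC : B ⟶ C} {hDE : D ⟶ E} {hEF : E ⟶ F} {hGJ : G ⟶ J} {hJK : J ⟶ K}
  {vDG : D ⟶ G} {vBE : B ⟶ E} {vEJ : E ⟶ J} {vCF : C ⟶ F} {vFK : F ⟶ K}
  {w_row : hGJ ≫ hJK = 0} {w_col : vCF ≫ vFK = 0}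
  (row : (ShortComplex.mk hGJ hJK w_row).ShortExact)
  (col : (ShortComplex.mk vCF vFK w_col).ShortExact)
  (w_DEF : hDE ≫ hEF = 0) (w_BEJ : vBE ≫ vEJ = 0)
  (sq_BCEF : hBC ≫ vCF = vBE ≫ hEF) (sq_DEGJ : hDE ≫ vEJ = vDG ≫ hGJ)
  (sq_EFJK : hEF ≫ vFK = vEJ ≫ hJK)
  (hij : c.Rel i j)

include w_DEF w_BEJ sq_BCEF sq_DEGJ sq_EFJK

lemma exists_comp_δ_eq_and_comp_δ_eq_neg_of_cycles
    (b : T ⟶ B.cycles j) (x : T ⟶ D.cycles j) (e : T ⟶ E.X i)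
    (he : x ≫ cyclesMap hDE j = b ≫ cyclesMap vBE j + e ≫ E.toCycles i j) :
    ∃ κ : T ⟶ K.homology i,
      κ ≫ row.δ i j hij = x ≫ D.homologyπ j ≫ homologyMap vDG j ∧
      κ ≫ col.δ i j hij = -(b ≫ B.homologyπ j ≫ homologyMap hBC j) := by
  have hd : e ≫ E.d i j = x ≫ D.iCycles j ≫ hDE.f j - b ≫ B.iCycles j ≫ vBE.f j := by
    rw [eq_sub_iff_add_eq']
    simpa using (he =≫ E.iCycles j).symm
  have lift_J : (x ≫ cyclesMap vDG j) ≫ G.iCycles j ≫ hGJ.f j = (e ≫ vEJ.f i) ≫ J.d i j := by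
    have h₁ : hDE.f j ≫ vEJ.f j = vDG.f j ≫ hGJ.f j := by simpa using congr_hom sq_DEGJ j
    have h₂ : vBE.f j ≫ vEJ.f j = 0 := by simpa using congr_hom w_BEJ j
    simp [reassoc_of% hd, h₁, h₂]
  have lift_F : (-(b ≫ cyclesMap hBC j)) ≫ C.iCycles j ≫ vCF.f j = (e ≫ hEF.f i) ≫ F.d i j := by
    have h₁ : hBC.f j ≫ vCF.f j = vBE.f j ≫ hEF.f j := by simpa using congr_hom sq_BCEF j
    have h₂ : hDE.f j ≫ hEF.f j = 0 := by simpa using congr_hom w_DEF j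
    simp [reassoc_of% hd, h₁, h₂]
  have lift_K : (e ≫ hEF.f i) ≫ vFK.f i = (e ≫ vEJ.f i) ≫ hJK.f i := by
    simpa using e ≫= congr_hom sq_EFJK i
  have cocycle : ((e ≫ vEJ.f i) ≫ hJK.f i) ≫ K.d i j = 0 := by
    have h : hGJ.f j ≫ hJK.f j = 0 := by simpa using congr_hom w_row j
    rw [Category.assoc, hJK.comm, ← Category.assoc, ← lift_J]
    simp only [Category.assoc, h, comp_zero]
  let κ := K.liftCycles _ j (c.next_eq' hij) cocycle
  have hκ : κ ≫ K.iCycles i = (e ≫ vEJ.f i) ≫ hJK.f i := K.liftCycles_i ..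
  refine ⟨κ ≫ K.homologyπ i, ?_, ?_⟩
  · simpa using comp_homologyπ_comp_δ_of_lift row hij κ _ _ hκ.symm lift_J
  · simpa using comp_homologyπ_comp_δ_of_lift col hij κ _ _ (lift_K.trans hκ.symm) lift_F

lemma exists_comp_δ_eq_and_comp_δ_eq_neg_up_to_refinements
    (b : T ⟶ B.homology j) (x : T ⟶ D.homology j)
    (hb : b ≫ homologyMap vBE j = x ≫ homologyMap hDE j) :
    ∃ (T' : 𝒜) (π : T' ⟶ T) (_ : Epi π) (κ : T' ⟶ K.homology i),
      κ ≫ row.δ i j hij = π ≫ x ≫ homologyMap vDG j ∧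
      κ ≫ col.δ i j hij = -(π ≫ b ≫ homologyMap hBC j) := by
  obtain ⟨T₁, π₁, _, zb, hzb⟩ :=
    surjective_up_to_refinements_of_epi (B.homologyπ j) b
  obtain ⟨T₂, π₂, _, zx, hzx⟩ :=
    surjective_up_to_refinements_of_epi (D.homologyπ j) (π₁ ≫ x)
  have homologous : (zx ≫ cyclesMap hDE j) ≫ E.homologyπ j =
      ((π₂ ≫ zb) ≫ cyclesMap vBE j) ≫ E.homologyπ j := by
    simp only [Category.assoc, ← homologyπ_naturality, ← reassoc_of% hzb, ← reassoc_of% hzx, hb]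
  obtain ⟨T₃, π₃, _, e, he⟩ :=
    (E.comp_homologyπ_eq_iff_up_to_refinements i j (c.prev_eq' hij) _ _).1 homologous
  obtain ⟨κ, hκ_row, hκ_col⟩ := exists_comp_δ_eq_and_comp_δ_eq_neg_of_cycles row col
    w_DEF w_BEJ sq_BCEF sq_DEGJ sq_EFJK hij (π₃ ≫ π₂ ≫ zb) (π₃ ≫ zx) e (by simpa using he)
  refine ⟨T₃, π₃ ≫ π₂ ≫ π₁, inferInstance, κ, ?_, ?_⟩
  · simp only [hκ_row, Category.assoc, reassoc_of% hzx]
  · simp only [hκ_col, Category.assoc, reassoc_of% hzb]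

theorem square_anticommutes_up_to_refinements
    (x : T ⟶ D.homology j) (b : T ⟶ B.homology j)
    (hb : b ≫ homologyMap vBE j = x ≫ homologyMap hDE j)
    (k : T ⟶ K.homology i) (hk : k ≫ row.δ i j hij = x ≫ homologyMap vDG j) :
    ∃ (T' : 𝒜) (π : T' ⟶ T) (_ : Epi π) (l : T' ⟶ J.homology i),
      π ≫ (b ≫ homologyMap hBC j + k ≫ col.δ i j hij) =
        l ≫ homologyMap hJK i ≫ col.δ i j hij := by
  obtain ⟨T₁, π₁, _, κ, hκ_row, hκ_col⟩ :=
    exists_comp_δ_eq_and_comp_δ_eq_neg_up_to_refinements row col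
      w_DEF w_BEJ sq_BCEF sq_DEGJ sq_EFJK hij b x hb
  have hker : (π₁ ≫ k - κ) ≫ row.δ i j hij = 0 := by
    rw [Preadditive.sub_comp, Category.assoc, hk, hκ_row, sub_self]
  obtain ⟨T₂, π₂, _, l, hl⟩ :=
    (row.homology_exact₃ i j hij).exact_up_to_refinements (π₁ ≫ k - κ) hker
  dsimp only at l hl
  refine ⟨T₂, π₂ ≫ π₁, inferInstance, l, ?_⟩
  rw [← reassoc_of% hl, Preadditive.sub_comp, hκ_col]
  simp [add_comm]

end Abelian

section ModuleCat

universe v u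

theorem square_anticommutes_general {R : Type u} [Ring R] {ι : Type*} {c : ComplexShape ι}
    {B C D E F G J K : HomologicalComplex (ModuleCat.{v} R) c}
    {hBC : B ⟶ C} {hDE : D ⟶ E} {hEF : E ⟶ F} {hGJ : G ⟶ J} {hJK : J ⟶ K}
    {vDG : D ⟶ G} {vBE : B ⟶ E} {vEJ : E ⟶ J} {vCF : C ⟶ F} {vFK : F ⟶ K}
    {w_row : hGJ ≫ hJK = 0} {w_col : vCF ≫ vFK = 0}
    (row : (ShortComplex.mk hGJ hJK w_row).ShortExact)
    (col : (ShortComplex.mk vCF vFK w_col).ShortExact)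
    (w_DEF : hDE ≫ hEF = 0) (w_BEJ : vBE ≫ vEJ = 0)
    (sq_BCEF : hBC ≫ vCF = vBE ≫ hEF) (sq_DEGJ : hDE ≫ vEJ = vDG ≫ hGJ)
    (sq_EFJK : hEF ≫ vFK = vEJ ≫ hJK)
    {i j : ι} (hij : c.Rel i j) (x : D.homology j)
    (b : B.homology j) (hb : homologyMap vBE j b = homologyMap hDE j x)
    (k : K.homology i) (hk : row.δ i j hij k = homologyMap vDG j x) :
    ∃ l : J.homology i,
      homologyMap hBC j b + col.δ i j hij k = col.δ i j hij (homologyMap hJK i l) := by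
  -- The generalized element to refine is the universal compatible triple `(b, x, k)`.
  let p := pullback.snd (homologyMap vBE j) (homologyMap hDE j)
  let q := pullback.snd (row.δ i j hij) (homologyMap vDG j)
  let x' := pullback.fst p q ≫ p
  let b' := pullback.fst p q ≫ pullback.fst (homologyMap vBE j) (homologyMap hDE j)
  let k' := pullback.snd p q ≫ pullback.fst (row.δ i j hij) (homologyMap vDG j)
  have hb' : b' ≫ homologyMap vBE j = x' ≫ homologyMap hDE j := by
    simpa only [b', x', Category.assoc] using pullback.fst p q ≫= pullback.condition
  have hk' : k' ≫ row.δ i j hij = x' ≫ homologyMap vDG j := by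
    calc k' ≫ row.δ i j hij = (pullback.snd p q ≫ q) ≫ homologyMap vDG j := by
          simp only [k', q, Category.assoc, pullback.condition]
      _ = x' ≫ homologyMap vDG j := by rw [← pullback.condition]
  let y := Concrete.pullbackMk p q (Concrete.pullbackMk _ _ b x hb)
    (Concrete.pullbackMk _ _ k x hk) (by simp [p, q])
  have hyb : b' y = b := by simp [b', y]
  have hyk : k' y = k := by simp [k', y]
  obtain ⟨T', π, _, l, hl⟩ := square_anticommutes_up_to_refinements row col
    w_DEF w_BEJ sq_BCEF sq_DEGJ sq_EFJK hij x' b' hb' k' hk'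
  obtain ⟨t, ht⟩ := (ModuleCat.epi_iff_surjective π).1 inferInstance y
  exact ⟨l t, by simpa [ht, hyb, hyk] using ConcreteCategory.congr_hom hl t⟩

end ModuleCat

/-- elementwise anticommutativity of the square
`h_B ∘ v_B⁻¹ ∘ h_D = −δ_K^v ∘ (δ_K^h)⁻¹ ∘ v_D` on `ker(H^m(D) → H^m(J))`: for every `[b]`
with `v_B[b] = h_D[x]` and every `[k]` with `δ_K^h[k] = v_D[x]`, the element
`h_B[b] + δ_K^v[k]` lies in the image of `δ_K^v ∘ h_J : H^{m−1}(J) → H^m(C)`. -/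
theorem square_anticommutes
    {R : Type*} [CommRing R]
    (A B C D E F G J K : CochainComplex (ModuleCat R) ℤ)
    (hAB : A ⟶ B) (hBC : B ⟶ C) (hDE : D ⟶ E) (hEF : E ⟶ F) (hGJ : G ⟶ J) (hJK : J ⟶ K)
    (vAD : A ⟶ D) (vDG : D ⟶ G) (vBE : B ⟶ E) (vEJ : E ⟶ J) (vCF : C ⟶ F) (vFK : F ⟶ K)
    (w₁ : hAB ≫ hBC = 0) (w₂ : hDE ≫ hEF = 0) (w₃ : hGJ ≫ hJK = 0)
    (w₄ : vAD ≫ vDG = 0) (w₅ : vBE ≫ vEJ = 0) (w₆ : vCF ≫ vFK = 0)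
    (row₁ : (ShortComplex.mk hAB hBC w₁).ShortExact)
    (row₂ : (ShortComplex.mk hDE hEF w₂).ShortExact)
    (row₃ : (ShortComplex.mk hGJ hJK w₃).ShortExact)
    (col₁ : (ShortComplex.mk vAD vDG w₄).ShortExact)
    (col₂ : (ShortComplex.mk vBE vEJ w₅).ShortExact)
    (col₃ : (ShortComplex.mk vCF vFK w₆).ShortExact)
    (sq₁ : hAB ≫ vBE = vAD ≫ hDE) (sq₂ : hBC ≫ vCF = vBE ≫ hEF)
    (sq₃ : hDE ≫ vEJ = vDG ≫ hGJ) (sq₄ : hEF ≫ vFK = vEJ ≫ hJK)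
    (m : ℤ) (x : D.homology m)
    (hx : homologyMap (vDG ≫ hGJ) m x = 0)
    (b : B.homology m) (hb : homologyMap vBE m b = homologyMap hDE m x)
    (k : K.homology (m - 1))
    (hk : row₃.δ (m - 1) m (by simp only [ComplexShape.up_Rel]; omega) k =
      homologyMap vDG m x) :
    ∃ j : J.homology (m - 1),
      homologyMap hBC m b +
          col₃.δ (m - 1) m (by simp only [ComplexShape.up_Rel]; omega) k =
        col₃.δ (m - 1) m (by simp only [ComplexShape.up_Rel]; omega)
          (homologyMap hJK (m - 1) j) := by
  exact square_anticommutes_general row₃ col₃ w₂ w₅ sq₂ sq₃ sq₄ _ x b hb k hk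
end
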